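/- Let (X, M) be a measurable space, μ₁ a finite positive measure on (X, M), μ₂ a finite Borel measure on ℝ with compact support, and N : X → ℝ an M-measurable function such that the pushforward measure N_*(μ₁) has compact support. Let 1 < p ≤ q < ∞ with p' = p/(p−1) and q' = q/(q−1). If B := sup_{r∈ℝ} μ₂([r,+∞))^{1/q} μ₁({x : N(x) < r})^{1/p'} is finite, then for every M-measurable function f : X → [0,+∞], (∫_ℝ (∫_{{x : N(x)<r}} f(x) dμ₁(x))^q dμ₂(r))^{1/q} ≤ min((p')^{1/p'} p^{1/q}, (q')^{1/p'} q^{1/q}) B (∫_X f(x)^p dμ₁(x))^{1/p}. -/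

import Mathlib

open MeasureTheory ENNReal
open scoped NNReal

/-!
Write `F x = μ₁ {y | N y ≤ N x}` and `G r = μ₂ [r, ∞)`. Under `μ₁` the values of `F` are
stochastically at least as large as Lebesgue measure on `[0, μ₁ univ]`, so for conjugate exponents
`s, s'` one has `∫_{N < r} F ^ (-1/s) dμ₁ ≤ s' μ₁ {N < r} ^ (1/s')`, and dually for `G` and `μ₂`.
Insert the weight `F ^ (1/s)` in the inner integral by Hölder's inequality, interchange the
integrals by Minkowski's integral inequality with exponent `q / p`, and apply the two estimates and
the definition of `B`: this gives the constant `s' ^ (1/p') * s ^ (1/q)`. The two constants in the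
minimum are `s = p` and `s = q`.
-/

section OrderedSpace

variable {α : Type*} [LinearOrder α] [TopologicalSpace α] [OrderTopology α]
  [SecondCountableTopology α] [MeasurableSpace α]

lemma measure_le_of_forall_measure_Iic_le {ν : Measure α} {S : Set α} {c : ℝ≥0∞}
    (hc : ∀ s ∈ S, ν (Set.Iic s) ≤ c) : ν S ≤ c := by
  by_cases hmax : ∃ m, IsGreatest S m
  · obtain ⟨m, hmS, hm⟩ := hmax
    exact (measure_mono hm).trans (hc m hmS)
  -- Without a maximum, `S` is covered by countably many `Set.Iio s` with `s ∈ S`.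
  · have hcover : S ⊆ ⋃ s ∈ S, Set.Iio s := fun x hx ↦ by
      obtain ⟨s, hs, hxs⟩ : ∃ s ∈ S, x < s := by
        by_contra! hle
        exact hmax ⟨x, hx, hle⟩
      exact Set.mem_biUnion hs hxs
    obtain ⟨T, hTS, hT, hunion⟩ :=
      TopologicalSpace.isOpen_biUnion_countable S Set.Iio fun _ _ ↦ isOpen_Iio
    calc ν S ≤ ν (⋃ s ∈ T, Set.Iio s) := measure_mono (hunion ▸ hcover)
      _ ≤ ν (⋃ s ∈ T, Set.Iic s) := by gcongr; exact Set.Iio_subset_Iic_self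
      _ = ⨆ s ∈ T, ν (Set.Iic s) :=
        measure_biUnion_eq_iSup hT fun s hs t ht ↦
          ⟨max s t, max_rec' T hs ht, Set.Iic_subset_Iic.2 (le_max_left s t),
            Set.Iic_subset_Iic.2 (le_max_right s t)⟩
      _ ≤ c := iSup₂_le fun s hs ↦ hc s (hTS hs)

lemma measure_le_of_forall_measure_Ici_le {ν : Measure α} {S : Set α} {c : ℝ≥0∞}
    (hc : ∀ s ∈ S, ν (Set.Ici s) ≤ c) : ν S ≤ c :=
  measure_le_of_forall_measure_Iic_le (α := αᵒᵈ) hc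

lemma ae_measure_Iic_ne_zero (ν : Measure α) : ∀ᵐ s ∂ν, ν (Set.Iic s) ≠ 0 :=
  ae_iff.2 <| le_zero_iff.1 <| measure_le_of_forall_measure_Iic_le fun _ hs ↦ (not_not.1 hs).le

lemma ae_measure_Ici_ne_zero (ν : Measure α) : ∀ᵐ s ∂ν, ν (Set.Ici s) ≠ 0 :=
  ae_measure_Iic_ne_zero (α := αᵒᵈ) ν

end OrderedSpace

lemma lintegral_eq_lintegral_meas_ofReal_lt {X : Type*} [MeasurableSpace X] (μ : Measure X)
    {f : X → ℝ≥0∞} (hf : Measurable f) :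
    ∫⁻ x, f x ∂μ = ∫⁻ t in Set.Ioi (0 : ℝ), μ {x | ENNReal.ofReal t < f x} := by
  by_cases hfin : ∀ᵐ x ∂μ, f x ≠ ⊤
  · calc ∫⁻ x, f x ∂μ = ∫⁻ x, ENNReal.ofReal (f x).toReal ∂μ :=
          lintegral_congr_ae (hfin.mono fun x hx ↦ (ofReal_toReal hx).symm)
      _ = ∫⁻ t in Set.Ioi (0 : ℝ), μ {x | t < (f x).toReal} :=
          lintegral_eq_lintegral_meas_lt μ (.of_forall fun _ ↦ toReal_nonneg)
            hf.ennreal_toReal.aemeasurable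
      _ = ∫⁻ t in Set.Ioi (0 : ℝ), μ {x | ENNReal.ofReal t < f x} :=
          setLIntegral_congr_fun measurableSet_Ioi fun t ht ↦ measure_congr <| by
            filter_upwards [hfin] with x hx
            exact propext (ofReal_lt_iff_lt_toReal ht.le hx).symm
  · have htop : μ {x | f x = ⊤} ≠ 0 := by simpa [ae_iff] using hfin
    have hlower : ∫⁻ _ in Set.Ioi (0 : ℝ), μ {x | f x = ⊤}
        ≤ ∫⁻ t in Set.Ioi (0 : ℝ), μ {x | ENNReal.ofReal t < f x} :=
      lintegral_mono fun t ↦ measure_mono fun x hx ↦ ofReal_lt_top.trans_eq (Eq.symm hx)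
    rw [setLIntegral_const, Real.volume_Ioi, mul_top htop] at hlower
    rw [top_le_iff.1 hlower]
    exact lintegral_eq_top_of_measure_eq_top_ne_zero hf.aemeasurable htop

lemma setLIntegral_Ioc_ofReal_rpow_neg_inv {s s' : ℝ} (hs : s.HolderConjugate s') {m : ℝ}
    (hm : 0 ≤ m) :
    ∫⁻ u in Set.Ioc 0 m, ENNReal.ofReal u ^ (-s⁻¹) =
      ENNReal.ofReal s' * ENNReal.ofReal m ^ s'⁻¹ := by
  have hexp : -1 < -s⁻¹ := neg_lt_neg (inv_lt_one_of_one_lt₀ hs.lt)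
  have hint : IntegrableOn (fun u : ℝ ↦ u ^ (-s⁻¹)) (Set.Ioc 0 m) :=
    (intervalIntegrable_iff_integrableOn_Ioc_of_le hm).1
      (intervalIntegral.intervalIntegrable_rpow' hexp)
  calc ∫⁻ u in Set.Ioc 0 m, ENNReal.ofReal u ^ (-s⁻¹)
      = ∫⁻ u in Set.Ioc 0 m, ENNReal.ofReal (u ^ (-s⁻¹)) :=
        setLIntegral_congr_fun measurableSet_Ioc fun u hu ↦ ofReal_rpow_of_pos hu.1
    _ = ENNReal.ofReal (∫ u in Set.Ioc 0 m, u ^ (-s⁻¹)) := by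
        refine (ofReal_integral_eq_lintegral_ofReal hint ?_).symm
        filter_upwards [ae_restrict_mem measurableSet_Ioc] with u hu
        exact Real.rpow_nonneg hu.1.le _
    _ = ENNReal.ofReal (s' * m ^ s'⁻¹) := by
        rw [← intervalIntegral.integral_of_le hm, integral_rpow (.inl hexp),
          neg_add_eq_sub, hs.one_sub_inv, Real.zero_rpow hs.symm.inv_ne_zero, sub_zero,
          div_inv_eq_mul, mul_comm]
    _ = ENNReal.ofReal s' * ENNReal.ofReal m ^ s'⁻¹ := by
        rw [ofReal_mul hs.symm.nonneg, ofReal_rpow_of_nonneg hm hs.symm.inv_nonneg]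

section OrderedBorelSpace

variable {α : Type*} [LinearOrder α] [TopologicalSpace α] [OrderTopology α]
  [MeasurableSpace α] [BorelSpace α]

lemma measurable_measure_Iic (ν : Measure α) : Measurable fun s ↦ ν (Set.Iic s) :=
  Monotone.measurable fun _ _ h ↦ measure_mono (Set.Iic_subset_Iic.2 h)

lemma measurable_measure_Ici (ν : Measure α) : Measurable fun s ↦ ν (Set.Ici s) :=
  Antitone.measurable fun _ _ h ↦ measure_mono (Set.Ici_subset_Ici.2 h)

variable [SecondCountableTopology α]

lemma lintegral_antitone_measure_Iic_le (ν : Measure α) [IsFiniteMeasure ν] {φ : ℝ≥0∞ → ℝ≥0∞}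
    (hφ : Antitone φ) :
    ∫⁻ s, φ (ν (Set.Iic s)) ∂ν ≤ ∫⁻ u in Set.Ioc 0 (ν.real Set.univ), φ (ENNReal.ofReal u) := by
  have hφν : Measurable fun s ↦ φ (ν (Set.Iic s)) := hφ.measurable.comp (measurable_measure_Iic ν)
  have hφvol : Measurable fun u ↦ φ (ENNReal.ofReal u) :=
    hφ.measurable.comp ENNReal.measurable_ofReal
  rw [lintegral_eq_lintegral_meas_ofReal_lt ν hφν, lintegral_eq_lintegral_meas_ofReal_lt _ hφvol]
  refine lintegral_mono fun t ↦ measure_le_of_forall_measure_Iic_le fun s hs ↦ ?_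
  have hsub : Set.Ioc 0 (ν.real (Set.Iic s)) ⊆
      {u | ENNReal.ofReal t < φ (ENNReal.ofReal u)} ∩ Set.Ioc 0 (ν.real Set.univ) :=
    fun u hu ↦ ⟨hs.trans_le (hφ (ofReal_le_of_le_toReal hu.2)), hu.1,
      hu.2.trans (measureReal_mono (Set.subset_univ _))⟩
  calc ν (Set.Iic s) = volume (Set.Ioc 0 (ν.real (Set.Iic s))) := by
        rw [Real.volume_Ioc, sub_zero, ofReal_measureReal]
    _ ≤ _ := measure_mono hsub
    _ = _ := (Measure.restrict_apply' measurableSet_Ioc).symm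

variable {s s' : ℝ}

lemma lintegral_measure_Iic_rpow_neg_inv_le (ν : Measure α) (hs : s.HolderConjugate s') :
    ∫⁻ t, ν (Set.Iic t) ^ (-s⁻¹) ∂ν ≤ ENNReal.ofReal s' * ν Set.univ ^ s'⁻¹ := by
  by_cases hν : ν Set.univ = ⊤
  · simp [hν, hs.symm.pos]
  · have : IsFiniteMeasure ν := ⟨Ne.lt_top hν⟩
    have hanti : Antitone fun u : ℝ≥0∞ ↦ u ^ (-s⁻¹) := fun u v huv ↦ by
      simp only [ENNReal.rpow_neg]
      exact ENNReal.inv_le_inv.2 (ENNReal.rpow_le_rpow huv hs.inv_nonneg)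
    refine (lintegral_antitone_measure_Iic_le ν hanti).trans_eq ?_
    rw [setLIntegral_Ioc_ofReal_rpow_neg_inv hs measureReal_nonneg, ofReal_measureReal]

lemma setLIntegral_Iio_measure_Iic_rpow_neg_inv_le (ν : Measure α) (hs : s.HolderConjugate s')
    (r : α) :
    ∫⁻ t in Set.Iio r, ν (Set.Iic t) ^ (-s⁻¹) ∂ν ≤
      ENNReal.ofReal s' * ν (Set.Iio r) ^ s'⁻¹ := by
  have hrestrict := lintegral_measure_Iic_rpow_neg_inv_le (ν.restrict (Set.Iio r)) hs
  rw [Measure.restrict_apply_univ] at hrestrict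
  refine (setLIntegral_congr_fun measurableSet_Iio fun t ht ↦ ?_).trans_le hrestrict
  simp only [Measure.restrict_eq_self ν (Set.Iic_subset_Iio.2 ht)]

lemma setLIntegral_Ioi_measure_Ici_rpow_neg_inv_le (ν : Measure α) (hs : s.HolderConjugate s')
    (r : α) :
    ∫⁻ t in Set.Ioi r, ν (Set.Ici t) ^ (-s⁻¹) ∂ν ≤
      ENNReal.ofReal s' * ν (Set.Ioi r) ^ s'⁻¹ :=
  setLIntegral_Iio_measure_Iic_rpow_neg_inv_le (α := αᵒᵈ) ν hs r

end OrderedBorelSpace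

section Minkowski

variable {X Y : Type*} [MeasurableSpace X] [MeasurableSpace Y]

lemma le_rpow_of_le_mul_rpow {θ θ' : ℝ} (hθ : θ.HolderConjugate θ') {I M : ℝ≥0∞} (hI : I ≠ ⊤)
    (h : I ≤ M * I ^ (1 / θ')) : I ≤ M ^ θ := by
  rcases eq_or_ne I 0 with rfl | hI0
  · exact zero_le
  have hsplit : I ^ (1 / θ) * I ^ (1 / θ') = I := by
    rw [← ENNReal.rpow_add _ _ hI0 hI, hθ.one_div_add_one_div, div_one, ENNReal.rpow_one]
  have hroot : I ^ (1 / θ) ≤ M := by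
    have hne : ∀ e : ℝ, I ^ e ≠ 0 ∧ I ^ e ≠ ⊤ := fun e ↦
      ⟨(ENNReal.rpow_pos (pos_iff_ne_zero.2 hI0) hI).ne', ENNReal.rpow_ne_top_of_ne_zero hI0 hI⟩
    exact (ENNReal.mul_le_mul_iff_left (hne _).1 (hne _).2).1 (hsplit.trans_le h)
  simpa [← ENNReal.rpow_mul, hθ.ne_zero] using ENNReal.rpow_le_rpow hroot hθ.nonneg

variable {μ : Measure X} {ν : Measure Y} [SFinite μ] {k : X → Y → ℝ≥0∞}

lemma lintegral_rpow_le_mul_of_le_lintegral [SFinite ν] {θ θ' : ℝ} (hθ : θ.HolderConjugate θ')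
    (hk : Measurable (Function.uncurry k)) {g : Y → ℝ≥0∞} (hg : Measurable g)
    (hgk : ∀ y, g y ≤ ∫⁻ x, k x y ∂μ) :
    ∫⁻ y, g y ^ θ ∂ν ≤
      (∫⁻ x, (∫⁻ y, k x y ^ θ ∂ν) ^ (1 / θ) ∂μ) * (∫⁻ y, g y ^ θ ∂ν) ^ (1 / θ') := by
  calc ∫⁻ y, g y ^ θ ∂ν ≤ ∫⁻ y, (∫⁻ x, k x y ∂μ) * g y ^ (θ - 1) ∂ν := by
        refine lintegral_mono fun y ↦ ?_
        calc g y ^ θ = g y * g y ^ (θ - 1) := by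
              nth_rw 2 [← ENNReal.rpow_one (g y)]
              rw [← ENNReal.rpow_add_of_nonneg _ _ zero_le_one hθ.sub_one_pos.le,
                add_sub_cancel]
          _ ≤ (∫⁻ x, k x y ∂μ) * g y ^ (θ - 1) := by gcongr; exact hgk y
    _ = ∫⁻ y, ∫⁻ x, k x y * g y ^ (θ - 1) ∂μ ∂ν :=
        lintegral_congr fun y ↦ (lintegral_mul_const _ hk.of_uncurry_right).symm
    _ = ∫⁻ x, ∫⁻ y, k x y * g y ^ (θ - 1) ∂ν ∂μ :=
        lintegral_lintegral_swap <| Measurable.aemeasurable <|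
          (hk.comp measurable_swap).mul ((hg.comp measurable_fst).pow_const _)
    _ ≤ ∫⁻ x, (∫⁻ y, k x y ^ θ ∂ν) ^ (1 / θ) * (∫⁻ y, g y ^ θ ∂ν) ^ (1 / θ') ∂μ := by
        refine lintegral_mono fun x ↦ ?_
        simpa only [Pi.mul_apply, ← ENNReal.rpow_mul, hθ.sub_one_mul_conj] using
          lintegral_mul_le_Lp_mul_Lq ν hθ hk.of_uncurry_left.aemeasurable
            (hg.pow_const (θ - 1)).aemeasurable
    _ = _ := lintegral_mul_const _ <|
        (Measurable.lintegral_prod_right' (f := fun z ↦ Function.uncurry k z ^ θ)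
          (hk.pow_const θ)).pow_const _

lemma lintegral_lintegral_rpow_le_of_isFiniteMeasure [IsFiniteMeasure ν] {θ : ℝ} (hθ : 1 < θ)
    (hk : Measurable (Function.uncurry k)) :
    ∫⁻ y, (∫⁻ x, k x y ∂μ) ^ θ ∂ν ≤ (∫⁻ x, (∫⁻ y, k x y ^ θ ∂ν) ^ (1 / θ) ∂μ) ^ θ := by
  have hconj := Real.HolderConjugate.conjExponent hθ
  -- For a simple function below the integrand the integral is finite, so its power can be absorbed.
  rw [lintegral_eq_nnreal]
  refine iSup₂_le fun ψ hψ ↦ ?_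
  rw [← SimpleFunc.lintegral_eq_lintegral]
  have hroot : ∀ y, ((ψ y : ℝ≥0∞) ^ θ⁻¹) ^ θ = ψ y := fun y ↦
    ENNReal.rpow_inv_rpow hconj.ne_zero _
  have hle : ∀ y, (ψ y : ℝ≥0∞) ^ θ⁻¹ ≤ ∫⁻ x, k x y ∂μ := fun y ↦
    (ENNReal.rpow_inv_le_iff hconj.pos).2 (hψ y)
  have hfin : ∫⁻ y, ψ y ∂ν ≠ ⊤ := by
    obtain ⟨c, hc⟩ := ψ.range.bddAbove
    exact (IsFiniteMeasure.lintegral_lt_top_of_bounded_to_ennreal ν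
      ⟨c, fun y ↦ coe_le_coe.2 (hc (ψ.mem_range_self y))⟩).ne
  have habsorb := lintegral_rpow_le_mul_of_le_lintegral (ν := ν) hconj hk
    (ψ.measurable.coe_nnreal_ennreal.pow_const θ⁻¹) hle
  simp only [hroot] at habsorb
  exact le_rpow_of_le_mul_rpow hconj hfin habsorb

theorem lintegral_lintegral_rpow_le [SFinite ν] {θ : ℝ} (hθ : 1 ≤ θ)
    (hk : Measurable (Function.uncurry k)) :
    ∫⁻ y, (∫⁻ x, k x y ∂μ) ^ θ ∂ν ≤ (∫⁻ x, (∫⁻ y, k x y ^ θ ∂ν) ^ (1 / θ) ∂μ) ^ θ := by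
  rcases hθ.eq_or_lt with rfl | hθ
  · simp only [ENNReal.rpow_one, div_one]
    exact (lintegral_lintegral_swap (f := fun y x ↦ k x y)
      (hk.comp measurable_swap).aemeasurable).le
  have hpartial (n : ℕ) : ∑ i ∈ Finset.range n, sfiniteSeq ν i ≤ ν := Measure.le_iff'.2 fun A ↦ by
    rw [Measure.finsetSum_apply]
    nth_rw 2 [← sum_sfiniteSeq ν]
    exact (ENNReal.sum_le_tsum _).trans (Measure.le_sum_apply _ _)
  rw [← sum_sfiniteSeq ν, lintegral_sum_measure, sum_sfiniteSeq]
  refine ENNReal.tsum_le_of_sum_range_le fun n ↦ ?_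
  rw [← lintegral_finsetSum_measure]
  refine (lintegral_lintegral_rpow_le_of_isFiniteMeasure hθ hk).trans ?_
  gcongr
  exact hpartial n

end Minkowski

section WeightedTest

variable {X Y : Type*} [MeasurableSpace X] [MeasurableSpace Y] {μ : Measure X} {ν : Measure Y}

lemma lintegral_le_weighted_Lp_mul_Lq {p p' : ℝ} (hp : p.HolderConjugate p') {f u : X → ℝ≥0∞}
    (hf : Measurable f) (hu : Measurable u) (hu₀ : ∀ᵐ x ∂μ, u x ≠ 0 ∧ u x ≠ ⊤) :
    ∫⁻ x, f x ∂μ ≤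
      (∫⁻ x, f x ^ p * u x ^ (p / p') ∂μ) ^ (1 / p) * (∫⁻ x, (u x)⁻¹ ∂μ) ^ (1 / p') := by
  have hfactor : ∀ᵐ x ∂μ, f x = f x * u x ^ (1 / p') * (u x)⁻¹ ^ (1 / p') := by
    filter_upwards [hu₀] with x ⟨hx₀, hx⟩
    rw [mul_assoc, ← ENNReal.mul_rpow_of_nonneg _ _ hp.symm.one_div_nonneg,
      ENNReal.mul_inv_cancel hx₀ hx, ENNReal.one_rpow, mul_one]
  have hleft (x : X) : (f x * u x ^ (1 / p')) ^ p = f x ^ p * u x ^ (p / p') := by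
    rw [ENNReal.mul_rpow_of_nonneg _ _ hp.nonneg, ← ENNReal.rpow_mul, one_div_mul_eq_div]
  have hright (x : X) : ((u x)⁻¹ ^ (1 / p')) ^ p' = (u x)⁻¹ := by
    rw [← ENNReal.rpow_mul, one_div_mul_cancel hp.symm.ne_zero, ENNReal.rpow_one]
  have hholder := lintegral_mul_le_Lp_mul_Lq μ hp (hf.mul (hu.pow_const (1 / p'))).aemeasurable
    (hu.inv.pow_const (1 / p')).aemeasurable
  simp only [Pi.mul_apply, Pi.inv_apply, hleft, hright] at hholder
  exact (lintegral_congr_ae hfactor).trans_le hholder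

lemma lintegral_rpow_le_weighted_Lp_mul_Lq {p q p' : ℝ} (hp : p.HolderConjugate p') (hq : 0 ≤ q)
    {f u : X → ℝ≥0∞} (hf : Measurable f) (hu : Measurable u)
    (hu₀ : ∀ᵐ x ∂μ, u x ≠ 0 ∧ u x ≠ ⊤) :
    (∫⁻ x, f x ∂μ) ^ q ≤
      (∫⁻ x, f x ^ p * u x ^ (p / p') ∂μ) ^ (q / p) * (∫⁻ x, (u x)⁻¹ ∂μ) ^ (q / p') := by
  refine (ENNReal.rpow_le_rpow (lintegral_le_weighted_Lp_mul_Lq hp hf hu hu₀) hq).trans_eq ?_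
  rw [ENNReal.mul_rpow_of_nonneg _ _ hq, ← ENNReal.rpow_mul, ← ENNReal.rpow_mul,
    one_div_mul_eq_div, one_div_mul_eq_div]

variable [SFinite μ] {R : X → Y → Prop}

lemma measurable_setLIntegral (hR : MeasurableSet {z : X × Y | R z.1 z.2}) {w : X → ℝ≥0∞}
    (hw : Measurable w) : Measurable fun y ↦ ∫⁻ x in {x | R x y}, w x ∂μ := by
  have hRy (y : Y) : MeasurableSet {x | R x y} := measurable_prodMk_right hR
  simp only [← lintegral_indicator (hRy _)]
  exact Measurable.lintegral_prod_left' ((hw.comp measurable_fst).indicator hR)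

variable [SFinite ν]

lemma lintegral_setLIntegral_rpow_mul_le (hR : MeasurableSet {z : X × Y | R z.1 z.2}) {θ : ℝ}
    (hθ : 1 ≤ θ) {w : X → ℝ≥0∞} (hw : Measurable w) {v : Y → ℝ≥0∞} (hv : Measurable v) :
    ∫⁻ y, (∫⁻ x in {x | R x y}, w x ∂μ) ^ θ * v y ∂ν ≤
      (∫⁻ x, w x * (∫⁻ y in {y | R x y}, v y ∂ν) ^ (1 / θ) ∂μ) ^ θ := by
  have hθ₀ : 0 < θ := one_pos.trans_le hθ
  let k : X → Y → ℝ≥0∞ := fun x y ↦ {z : X × Y | R z.1 z.2}.indicator (fun z ↦ w z.1) (x, y)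
  have hk : Measurable (Function.uncurry k) := (hw.comp measurable_fst).indicator hR
  have hRx (x : X) : MeasurableSet {y | R x y} := measurable_prodMk_left hR
  have hRy (y : Y) : MeasurableSet {x | R x y} := measurable_prodMk_right hR
  have hky (y : Y) : ∫⁻ x, k x y ∂μ = ∫⁻ x in {x | R x y}, w x ∂μ :=
    lintegral_indicator (hRy y) w
  have hkx (x : X) : (∫⁻ y, k x y ^ θ ∂ν.withDensity v) ^ (1 / θ) =
      w x * (∫⁻ y in {y | R x y}, v y ∂ν) ^ (1 / θ) := by
    have hpow (y : Y) : k x y ^ θ = {y | R x y}.indicator (fun _ ↦ w x ^ θ) y := by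
      by_cases h : R x y <;> simp [k, h, hθ₀]
    rw [lintegral_congr hpow, lintegral_indicator_const (hRx x), withDensity_apply _ (hRx x),
      ENNReal.mul_rpow_of_nonneg _ _ (by positivity), one_div, ENNReal.rpow_rpow_inv hθ₀.ne']
  have hminkowski := lintegral_lintegral_rpow_le (μ := μ) (ν := ν.withDensity v) hθ hk
  simp only [hky, hkx, lintegral_withDensity_eq_lintegral_mul ν hv
    ((measurable_setLIntegral hR hw).pow_const θ), Pi.mul_apply] at hminkowski
  simpa only [mul_comm] using hminkowski

theorem lintegral_setLIntegral_rpow_le_of_weights (hR : MeasurableSet {z : X × Y | R z.1 z.2})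
    {p q p' : ℝ} (hp : p.HolderConjugate p') (hpq : p ≤ q) {u : X → ℝ≥0∞} (hu : Measurable u)
    (hu₀ : ∀ᵐ y ∂ν, ∀ᵐ x ∂μ, R x y → u x ≠ 0 ∧ u x ≠ ⊤) {v : Y → ℝ≥0∞} (hv : Measurable v)
    {C D : ℝ≥0∞}
    (hC : ∀ᵐ y ∂ν, (∫⁻ x in {x | R x y}, (u x)⁻¹ ∂μ) ^ (q / p') ≤ C * v y)
    (hD : ∀ x, u x ^ (q / p') * ∫⁻ y in {y | R x y}, v y ∂ν ≤ D)
    {f : X → ℝ≥0∞} (hf : Measurable f) :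
    ∫⁻ y, (∫⁻ x in {x | R x y}, f x ∂μ) ^ q ∂ν ≤ C * D * (∫⁻ x, f x ^ p ∂μ) ^ (q / p) := by
  have hp₀ : 0 < p := hp.pos
  have hq₀ : 0 < q := hp₀.trans_le hpq
  set w : X → ℝ≥0∞ := fun x ↦ f x ^ p * u x ^ (p / p') with hw
  have hwm : Measurable w := (hf.pow_const p).mul (hu.pow_const _)
  have hholder : ∀ᵐ y ∂ν, (∫⁻ x in {x | R x y}, f x ∂μ) ^ q ≤
      C * ((∫⁻ x in {x | R x y}, w x ∂μ) ^ (q / p) * v y) := by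
    filter_upwards [hu₀, hC] with y hy hCy
    have hRy : MeasurableSet {x | R x y} := measurable_prodMk_right hR
    rw [mul_left_comm]
    exact (lintegral_rpow_le_weighted_Lp_mul_Lq hp hq₀.le hf hu
      ((ae_restrict_iff' hRy).2 hy)).trans (mul_le_mul_right hCy _)
  have hweight (x : X) : w x * (∫⁻ y in {y | R x y}, v y ∂ν) ^ (1 / (q / p)) ≤
      f x ^ p * D ^ (p / q) := by
    calc w x * (∫⁻ y in {y | R x y}, v y ∂ν) ^ (1 / (q / p))
        = f x ^ p * (u x ^ (q / p') * ∫⁻ y in {y | R x y}, v y ∂ν) ^ (p / q) := by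
          rw [hw, ENNReal.mul_rpow_of_nonneg _ _ (by positivity), ← ENNReal.rpow_mul, mul_assoc,
            one_div_div, div_mul_div_comm, mul_comm q p, mul_div_mul_right _ _ hq₀.ne']
      _ ≤ f x ^ p * D ^ (p / q) := by gcongr; exact hD x
  calc ∫⁻ y, (∫⁻ x in {x | R x y}, f x ∂μ) ^ q ∂ν
      ≤ C * ∫⁻ y, (∫⁻ x in {x | R x y}, w x ∂μ) ^ (q / p) * v y ∂ν := by
        have hwR : Measurable fun y ↦ (∫⁻ x in {x | R x y}, w x ∂μ) ^ (q / p) * v y :=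
          ((measurable_setLIntegral hR hwm).pow_const _).mul hv
        exact (lintegral_mono_ae hholder).trans_eq (lintegral_const_mul C hwR)
    _ ≤ C * (∫⁻ x, f x ^ p * D ^ (p / q) ∂μ) ^ (q / p) := by
        gcongr
        exact (lintegral_setLIntegral_rpow_mul_le hR ((one_le_div hp₀).2 hpq) hwm hv).trans
          (ENNReal.rpow_le_rpow (lintegral_mono hweight) (by positivity))
    _ = C * D * (∫⁻ x, f x ^ p ∂μ) ^ (q / p) := by
        rw [lintegral_mul_const _ (hf.pow_const p), ENNReal.mul_rpow_of_nonneg _ _ (by positivity),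
          ← ENNReal.rpow_mul, div_mul_div_cancel₀ hq₀.ne', div_self hp₀.ne', ENNReal.rpow_one]
        ring

end WeightedTest

lemma ennreal_rpow_right_comm (a : ℝ≥0∞) (x y : ℝ) : (a ^ x) ^ y = (a ^ y) ^ x := by
  rw [← ENNReal.rpow_mul, mul_comm, ENNReal.rpow_mul]

lemma ennreal_le_mul_inv_of_mul_le {a b c : ℝ≥0∞} (ha : a ≠ 0) (hc : c ≠ ⊤) (h : a * b ≤ c) :
    b ≤ c * a⁻¹ := by
  rwa [← div_eq_mul_inv, ENNReal.le_div_iff_mul_le (.inl ha) (.inr hc), mul_comm]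

section Hardy

variable {X α : Type*} [MeasurableSpace X] [LinearOrder α] [TopologicalSpace α] [OrderTopology α]
  [MeasurableSpace α] {μ₁ : Measure X} {μ₂ : Measure α} {N : X → α}

lemma measurable_measure_le [BorelSpace α] (hN : Measurable N) :
    Measurable fun x ↦ μ₁ {y | N y ≤ N x} := by
  have hmap (t : α) : μ₁.map N (Set.Iic t) = μ₁ {y | N y ≤ t} :=
    Measure.map_apply hN measurableSet_Iic
  simpa only [Function.comp_def, hmap] using (measurable_measure_Iic (μ₁.map N)).comp hN

lemma measure_Ioi_mul_measure_le_rpow_le [SecondCountableTopology α] {e : ℝ} (he : 0 ≤ e)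
    {A : ℝ≥0∞} (hA : ∀ r, μ₂ (Set.Ici r) * μ₁ {x | N x < r} ^ e ≤ A) (t : α) :
    μ₂ (Set.Ioi t) * μ₁ {x | N x ≤ t} ^ e ≤ A := by
  rw [mul_comm]
  refine measure_le_of_forall_measure_Ici_le (ν := μ₁ {x | N x ≤ t} ^ e • μ₂) fun r hr ↦ ?_
  rw [Measure.smul_apply, smul_eq_mul, mul_comm]
  refine le_trans ?_ (hA r)
  gcongr
  exact hr

variable [SecondCountableTopology α] [BorelSpace α]

lemma ae_measure_le_ne_zero (hN : Measurable N) : ∀ᵐ x ∂μ₁, μ₁ {y | N y ≤ N x} ≠ 0 := by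
  filter_upwards [ae_of_ae_map hN.aemeasurable (ae_measure_Iic_ne_zero (μ₁.map N))] with x hx
  rwa [Measure.map_apply hN measurableSet_Iic] at hx

lemma setLIntegral_measure_le_rpow_neg_inv_le (hN : Measurable N) {s s' : ℝ}
    (hs : s.HolderConjugate s') (r : α) :
    ∫⁻ x in {x | N x < r}, μ₁ {y | N y ≤ N x} ^ (-s⁻¹) ∂μ₁ ≤
      ENNReal.ofReal s' * μ₁ {x | N x < r} ^ s'⁻¹ := by
  have hIic (t : α) : μ₁.map N (Set.Iic t) = μ₁ {y | N y ≤ t} :=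
    Measure.map_apply hN measurableSet_Iic
  have hIio : μ₁.map N (Set.Iio r) = μ₁ {x | N x < r} := Measure.map_apply hN measurableSet_Iio
  have hmap := setLIntegral_Iio_measure_Iic_rpow_neg_inv_le (μ₁.map N) hs r
  rwa [setLIntegral_map measurableSet_Iio ((measurable_measure_Iic _).pow_const _) hN, hIio,
    lintegral_congr fun x ↦ by rw [hIic]] at hmap

section Muckenhoupt

variable {e s s' : ℝ} {A : ℝ≥0∞}

lemma ae_measure_le_rpow_ne_zero_and_ne_top (hN : Measurable N) (he : 0 < e)
    (hA : ∀ r, μ₂ (Set.Ici r) * μ₁ {x | N x < r} ^ e ≤ A) (hA_top : A ≠ ⊤) (c : ℝ) :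
    ∀ᵐ r ∂μ₂, ∀ᵐ x ∂μ₁, N x < r → μ₁ {y | N y ≤ N x} ^ c ≠ 0 ∧ μ₁ {y | N y ≤ N x} ^ c ≠ ⊤ := by
  filter_upwards [ae_measure_Ici_ne_zero μ₂] with r hr
  filter_upwards [ae_measure_le_ne_zero hN] with x hx hxr
  have hlt : μ₁ {y | N y < r} < ⊤ := (ENNReal.rpow_lt_top_iff_of_pos he).1 <|
    (ennreal_le_mul_inv_of_mul_le hr hA_top (hA r)).trans_lt
      (mul_lt_top hA_top.lt_top (inv_ne_top.2 hr).lt_top)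
  have hfin : μ₁ {y | N y ≤ N x} ≠ ⊤ :=
    ((measure_mono fun y (hy : N y ≤ N x) ↦ hy.trans_lt hxr).trans_lt hlt).ne
  exact ⟨(ENNReal.rpow_pos (pos_iff_ne_zero.2 hx) hfin).ne', ENNReal.rpow_ne_top_of_ne_zero hx hfin⟩

lemma setLIntegral_measure_le_rpow_inv_rpow_le (hN : Measurable N) (hs : s.HolderConjugate s')
    (he : 0 ≤ e) {r : α} (hr : μ₂ (Set.Ici r) ≠ 0)
    (hA : μ₂ (Set.Ici r) * μ₁ {x | N x < r} ^ e ≤ A) (hA_top : A ≠ ⊤) :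
    (∫⁻ x in {x | N x < r}, (μ₁ {y | N y ≤ N x} ^ s⁻¹)⁻¹ ∂μ₁) ^ e ≤
      ENNReal.ofReal s' ^ e * A ^ s'⁻¹ * μ₂ (Set.Ici r) ^ (-s'⁻¹) := by
  have hs'_inv : 0 ≤ s'⁻¹ := hs.symm.inv_nonneg
  calc (∫⁻ x in {x | N x < r}, (μ₁ {y | N y ≤ N x} ^ s⁻¹)⁻¹ ∂μ₁) ^ e
      ≤ (ENNReal.ofReal s' * μ₁ {x | N x < r} ^ s'⁻¹) ^ e := by
        simp only [← ENNReal.rpow_neg]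
        gcongr
        exact setLIntegral_measure_le_rpow_neg_inv_le hN hs r
    _ = ENNReal.ofReal s' ^ e * (μ₁ {x | N x < r} ^ e) ^ s'⁻¹ := by
        rw [ENNReal.mul_rpow_of_nonneg _ _ he, ennreal_rpow_right_comm]
    _ ≤ ENNReal.ofReal s' ^ e * (A * (μ₂ (Set.Ici r))⁻¹) ^ s'⁻¹ := by
        gcongr
        exact ennreal_le_mul_inv_of_mul_le hr hA_top hA
    _ = ENNReal.ofReal s' ^ e * A ^ s'⁻¹ * μ₂ (Set.Ici r) ^ (-s'⁻¹) := by
        rw [ENNReal.mul_rpow_of_nonneg _ _ hs'_inv, ENNReal.inv_rpow, ENNReal.rpow_neg, mul_assoc]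

lemma measure_le_rpow_mul_setLIntegral_Ioi_le (hs : s.HolderConjugate s') (he : 0 ≤ e)
    (hA : ∀ r, μ₂ (Set.Ici r) * μ₁ {x | N x < r} ^ e ≤ A) (t : α) :
    (μ₁ {y | N y ≤ t} ^ s⁻¹) ^ e * ∫⁻ r in Set.Ioi t, μ₂ (Set.Ici r) ^ (-s'⁻¹) ∂μ₂ ≤
      ENNReal.ofReal s * A ^ s⁻¹ := by
  have hs_inv : 0 ≤ s⁻¹ := hs.inv_nonneg
  calc (μ₁ {y | N y ≤ t} ^ s⁻¹) ^ e * ∫⁻ r in Set.Ioi t, μ₂ (Set.Ici r) ^ (-s'⁻¹) ∂μ₂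
      ≤ (μ₁ {y | N y ≤ t} ^ s⁻¹) ^ e * (ENNReal.ofReal s * μ₂ (Set.Ioi t) ^ s⁻¹) := by
        gcongr
        exact setLIntegral_Ioi_measure_Ici_rpow_neg_inv_le μ₂ hs.symm t
    _ = ENNReal.ofReal s * (μ₂ (Set.Ioi t) * μ₁ {y | N y ≤ t} ^ e) ^ s⁻¹ := by
        rw [ENNReal.mul_rpow_of_nonneg _ _ hs_inv, ennreal_rpow_right_comm]
        ring
    _ ≤ ENNReal.ofReal s * A ^ s⁻¹ := by
        gcongr
        exact measure_Ioi_mul_measure_le_rpow_le he hA t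

end Muckenhoupt

variable [SFinite μ₁] [SFinite μ₂] {p q p' : ℝ} {f : X → ℝ≥0∞}

theorem lintegral_hardy_rpow_le (hN : Measurable N) (hp : p.HolderConjugate p') (hpq : p ≤ q)
    {s s' : ℝ} (hs : s.HolderConjugate s') {A : ℝ≥0∞}
    (hA : ∀ r, μ₂ (Set.Ici r) * μ₁ {x | N x < r} ^ (q / p') ≤ A) (hA_top : A ≠ ⊤)
    (hf : Measurable f) :
    ∫⁻ r, (∫⁻ x in {x | N x < r}, f x ∂μ₁) ^ q ∂μ₂ ≤
      ENNReal.ofReal s' ^ (q / p') * ENNReal.ofReal s * A * (∫⁻ x, f x ^ p ∂μ₁) ^ (q / p) := by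
  have he : 0 < q / p' := div_pos (hp.pos.trans_le hpq) hp.symm.pos
  have hR : MeasurableSet {z : X × α | N z.1 < z.2} :=
    measurableSet_lt (hN.comp measurable_fst) measurable_snd
  have hC := (ae_measure_Ici_ne_zero μ₂).mono fun r hr ↦
    setLIntegral_measure_le_rpow_inv_rpow_le hN hs he.le hr (hA r) hA_top
  have hD (x : X) := measure_le_rpow_mul_setLIntegral_Ioi_le hs he.le hA (N x)
  have hA_split : A ^ s'⁻¹ * A ^ s⁻¹ = A := by
    rw [← ENNReal.rpow_add_of_nonneg _ _ hs.symm.inv_nonneg hs.inv_nonneg,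
      hs.symm.inv_add_inv_eq_one, ENNReal.rpow_one]
  refine (lintegral_setLIntegral_rpow_le_of_weights hR hp hpq
    ((measurable_measure_le hN).pow_const s⁻¹)
    (ae_measure_le_rpow_ne_zero_and_ne_top hN he hA hA_top s⁻¹)
    ((measurable_measure_Ici μ₂).pow_const (-s'⁻¹)) hC hD hf).trans_eq ?_
  rw [mul_mul_mul_comm, hA_split]

theorem hardy_inequality_of_holderConjugate (hN : Measurable N) (hp : p.HolderConjugate p')
    (hpq : p ≤ q) {s s' : ℝ} (hs : s.HolderConjugate s') {B : ℝ≥0∞}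
    (hB : ∀ r, μ₂ (Set.Ici r) ^ (1 / q) * μ₁ {x | N x < r} ^ (1 / p') ≤ B) (hB_top : B ≠ ⊤)
    (hf : Measurable f) :
    (∫⁻ r, (∫⁻ x in {x | N x < r}, f x ∂μ₁) ^ q ∂μ₂) ^ (1 / q) ≤
      ENNReal.ofReal (s' ^ (1 / p') * s ^ (1 / q)) * B * (∫⁻ x, f x ^ p ∂μ₁) ^ (1 / p) := by
  have hq₀ : 0 < q := hp.pos.trans_le hpq
  have hA (r : α) : μ₂ (Set.Ici r) * μ₁ {x | N x < r} ^ (q / p') ≤ B ^ q := by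
    refine le_of_eq_of_le ?_ (ENNReal.rpow_le_rpow (hB r) hq₀.le)
    rw [ENNReal.mul_rpow_of_nonneg _ _ hq₀.le, ← ENNReal.rpow_mul, ← ENNReal.rpow_mul,
      one_div_mul_cancel hq₀.ne', ENNReal.rpow_one, one_div_mul_eq_div]
  rw [one_div q, ENNReal.rpow_inv_le_iff hq₀]
  refine (lintegral_hardy_rpow_le hN hp hpq hs hA (ENNReal.rpow_ne_top_of_nonneg hq₀.le hB_top)
    hf).trans_eq ?_
  rw [ENNReal.mul_rpow_of_nonneg _ _ hq₀.le, ENNReal.mul_rpow_of_nonneg _ _ hq₀.le,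
    ENNReal.ofReal_mul (Real.rpow_nonneg hs.symm.nonneg _), ENNReal.mul_rpow_of_nonneg _ _ hq₀.le,
    ← ENNReal.ofReal_rpow_of_pos hs.symm.pos, ← ENNReal.ofReal_rpow_of_pos hs.pos,
    ← ENNReal.rpow_mul, ENNReal.rpow_inv_rpow hq₀.ne', ← ENNReal.rpow_mul, one_div_mul_eq_div,
    one_div_mul_eq_div]

end Hardy

theorem hardy_inequality_pushforward_compact_general
    {X α : Type*} [MeasurableSpace X] [LinearOrder α] [TopologicalSpace α] [OrderTopology α]
    [SecondCountableTopology α] [MeasurableSpace α] [BorelSpace α]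
    {μ₁ : Measure X} [SFinite μ₁] {μ₂ : Measure α} [SFinite μ₂]
    {N : X → α} (hN : Measurable N) {p q p' q' : ℝ}
    (hp : p.HolderConjugate p') (hq : q.HolderConjugate q') (hpq : p ≤ q) {B : ℝ≥0∞}
    (hB : ∀ r, μ₂ (Set.Ici r) ^ (1 / q) * μ₁ {x | N x < r} ^ (1 / p') ≤ B) (hB_top : B ≠ ⊤)
    {f : X → ℝ≥0∞} (hf : Measurable f) :
    (∫⁻ r, (∫⁻ x in {x | N x < r}, f x ∂μ₁) ^ q ∂μ₂) ^ (1 / q) ≤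
      ENNReal.ofReal (min (p' ^ (1 / p') * p ^ (1 / q)) (q' ^ (1 / p') * q ^ (1 / q))) * B *
        (∫⁻ x, f x ^ p ∂μ₁) ^ (1 / p) := by
  rcases min_choice (p' ^ (1 / p') * p ^ (1 / q)) (q' ^ (1 / p') * q ^ (1 / q)) with hmin | hmin
  · rw [hmin]
    exact hardy_inequality_of_holderConjugate hN hp hpq hp hB hB_top hf
  · rw [hmin]
    exact hardy_inequality_of_holderConjugate hN hp hpq hq hB hB_top hf

/-- Hardy inequality on a general measurable space, `μ₁` finite with `N_*(μ₁)` compactly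
supported, `μ₂` a finite compactly supported Borel measure on ℝ, and weight `ψ = 1`. -/
theorem hardy_inequality_pushforward_compact
    {X : Type*} [MeasurableSpace X]
    (μ₁ : Measure X) [IsFiniteMeasure μ₁] (μ₂ : Measure ℝ) [IsFiniteMeasure μ₂]
    (N : X → ℝ) (hN : Measurable N)
    (K₁ K₂ : Set ℝ) (hK₁ : IsCompact K₁) (hK₂ : IsCompact K₂)
    (hNK : Measure.map N μ₁ K₁ᶜ = 0) (hμ₂K : μ₂ K₂ᶜ = 0)
    (p q p' q' : ℝ) (hp : 1 < p) (hpq : p ≤ q)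
    (hp' : p' = p / (p - 1)) (hq' : q' = q / (q - 1))
    (B : ℝ≥0∞)
    (hB : B = ⨆ r : ℝ, μ₂ (Set.Ici r) ^ (1 / q) * μ₁ {x | N x < r} ^ (1 / p'))
    (hBfin : B ≠ ⊤) :
    ∀ f : X → ℝ≥0∞, Measurable f →
      (∫⁻ r, (∫⁻ x in {x | N x < r}, f x ∂μ₁) ^ q ∂μ₂) ^ (1 / q) ≤
        ENNReal.ofReal (min (p' ^ (1 / p') * p ^ (1 / q)) (q' ^ (1 / p') * q ^ (1 / q))) * B *
          (∫⁻ x, f x ^ p ∂μ₁) ^ (1 / p) := by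
  intro f hf
  exact hardy_inequality_pushforward_compact_general hN
    ((Real.holderConjugate_iff_eq_conjExponent hp).2 hp')
    ((Real.holderConjugate_iff_eq_conjExponent (hp.trans_le hpq)).2 hq') hpq
    (fun r ↦ hB ▸ le_iSup
      (fun r : ℝ ↦ μ₂ (Set.Ici r) ^ (1 / q) * μ₁ {x | N x < r} ^ (1 / p')) r) hBfin hf
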